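/- Let V be a finite-dimensional real inner product space, r ≥ 3, and let Cl⁰_r denote the even subalgebra of the Clifford algebra over ℝ of the negative-definite quadratic form Q(v) = -‖v‖² on ℝ^r, with canonical embedding ι and standard orthonormal basis e_1, …, e_r. Let φ : Cl⁰_r → End(V) be a unital ℝ-algebra homomorphism such that J_{ij} := φ(ι(e_i) * ι(e_j)) is a skew-adjoint endomorphism of V for all i ≠ j. Let κ ∈ ℝ and let R : V × V → End(V) be an ℝ-bilinear map satisfying, for all X, Y ∈ V, the identity [R(X,Y), J_{12}] = κ Σ_{s=3}^r ( ⟨J_{s1}X, Y⟩ J_{s2} − ⟨J_{s2}X, Y⟩ J_{s1} ). Then for all X, Y ∈ V: [R(J_{12}X, J_{12}Y), J_{12}] = κ Σ_{s=3}^r ( −⟨J_{s1}X, Y⟩ J_{s2} + ⟨J_{s2}X, Y⟩ J_{s1} ). -/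

import Mathlib

open scoped RealInnerProductSpace

/-
Write `J a b` for the image of `a * b` under a homomorphism out of the even Clifford algebra. For
pairwise orthogonal `a`, `b`, `s`, the bivectors `J s a` and `J s b` anticommute with `J a b`, and
`J a b ^ 2 = -(Q a * Q b)`. So if `J a b` is skew-adjoint, moving it across the form turns
`⟪T (J a b X), J a b Y⟫` into `-(Q a * Q b) * ⟪T X, Y⟫` for `T = J s a` and `T = J s b`, and every
coefficient of the assumed commutator identity is multiplied by `-(Q a * Q b)`.
-/

section EvenHom

variable {K M A : Type*} [CommRing K] [AddCommGroup M] [Module K M] {Q : QuadraticForm K M}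
  [Ring A] [Algebra K A] (f : CliffordAlgebra.EvenHom Q A) {a b s : M}

theorem evenHom_bilin_swap_of_isOrtho (hab : Q.IsOrtho a b) : f.bilin a b = -f.bilin b a := by
  have h := f.contract (a + b)
  simp only [map_add, LinearMap.add_apply, f.contract, QuadraticMap.isOrtho_def.mp hab] at h
  exact eq_neg_of_add_eq_zero_left (by linear_combination (norm := abel) h)

theorem evenHom_bilin_mul_self_of_isOrtho (hab : Q.IsOrtho a b) :
    f.bilin a b * f.bilin a b = algebraMap K A (-(Q a * Q b)) := by
  calc f.bilin a b * f.bilin a b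
    _ = -(f.bilin a b * f.bilin b a) := by
      rw [evenHom_bilin_swap_of_isOrtho f hab.symm, mul_neg, neg_neg]
    _ = algebraMap K A (-(Q a * Q b)) := by
      rw [f.contract_mid, f.contract, Algebra.smul_def, ← map_mul, ← map_neg, mul_comm]

theorem evenHom_bilin_anticomm_left_of_isOrtho (hab : Q.IsOrtho a b) (hsa : Q.IsOrtho s a)
    (hsb : Q.IsOrtho s b) : f.bilin s a * f.bilin a b = -(f.bilin a b * f.bilin s a) := by
  calc f.bilin s a * f.bilin a b
    _ = -(Q a • f.bilin b s) := by
      rw [f.contract_mid, evenHom_bilin_swap_of_isOrtho f hsb, smul_neg]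
    _ = -(f.bilin b a * f.bilin a s) := by rw [f.contract_mid]
    _ = -(f.bilin a b * f.bilin s a) := by
      rw [evenHom_bilin_swap_of_isOrtho f hab, evenHom_bilin_swap_of_isOrtho f hsa, neg_mul_neg]

theorem evenHom_bilin_anticomm_right_of_isOrtho (hab : Q.IsOrtho a b) (hsa : Q.IsOrtho s a)
    (hsb : Q.IsOrtho s b) : f.bilin s b * f.bilin a b = -(f.bilin a b * f.bilin s b) := by
  rw [evenHom_bilin_swap_of_isOrtho f hab, mul_neg, neg_mul,
    evenHom_bilin_anticomm_left_of_isOrtho f hab.symm hsb hsa]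

end EvenHom

theorem bilin_apply_apply_of_isSkewAdjoint_of_anticomm {K V : Type*} [CommRing K]
    [AddCommGroup V] [Module K V] {B : LinearMap.BilinForm K V} {J T : Module.End K V}
    (hJ : B.IsSkewAdjoint J) (hTJ : T * J = -(J * T)) (x y : V) :
    B (T (J x)) (J y) = B (T x) ((J * J) y) := by
  calc B (T (J x)) (J y)
    _ = -B (J (T x)) (J y) := by
      rw [← Module.End.mul_apply, hTJ, LinearMap.neg_apply, map_neg, LinearMap.neg_apply,
        Module.End.mul_apply]
    _ = B (T x) ((J * J) y) := by
      rw [hJ (T x) (J y), Pi.neg_apply, map_neg, neg_neg, Module.End.mul_apply]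

theorem isOrtho_of_inner_eq_zero {E : Type*} [NormedAddCommGroup E] [InnerProductSpace ℝ E]
    {Q : QuadraticForm ℝ E} (hQ : ∀ v, Q v = -‖v‖ ^ 2) {x y : E} (hxy : ⟪x, y⟫ = 0) :
    Q.IsOrtho x y := by
  rw [QuadraticMap.isOrtho_def, hQ, hQ, hQ, norm_add_sq_real, hxy]
  ring

theorem isOrtho_single_of_ne {ι : Type*} [Fintype ι] [DecidableEq ι]
    {Q : QuadraticForm ℝ (EuclideanSpace ℝ ι)} (hQ : ∀ v, Q v = -‖v‖ ^ 2) {i j : ι} (hij : i ≠ j) :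
    Q.IsOrtho (EuclideanSpace.single i 1) (EuclideanSpace.single j 1) :=
  isOrtho_of_inner_eq_zero hQ (by simp [EuclideanSpace.inner_single_left, hij])

theorem stmt5_general {K M V ι : Type*} [CommRing K] [AddCommGroup M] [Module K M]
    [AddCommGroup V] [Module K V] {Q : QuadraticForm K M}
    (f : CliffordAlgebra.EvenHom Q (Module.End K V)) (B : LinearMap.BilinForm K V)
    {a b : M} (hab : Q.IsOrtho a b) (hskew : B.IsSkewAdjoint (f.bilin a b))
    (S : Finset ι) (e : ι → M) (ha : ∀ s ∈ S, Q.IsOrtho (e s) a)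
    (hb : ∀ s ∈ S, Q.IsOrtho (e s) b) (κ : K) (R : V → V → Module.End K V)
    (hR : ∀ X Y, ⁅R X Y, f.bilin a b⁆ =
      κ • ∑ s ∈ S, (B (f.bilin (e s) a X) Y • f.bilin (e s) b
        - B (f.bilin (e s) b X) Y • f.bilin (e s) a)) (X Y : V) :
    ⁅R (f.bilin a b X) (f.bilin a b Y), f.bilin a b⁆ =
      (Q a * Q b * κ) • ∑ s ∈ S, (-(B (f.bilin (e s) a X) Y • f.bilin (e s) b)
        + B (f.bilin (e s) b X) Y • f.bilin (e s) a) := by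
  have coeff {T : Module.End K V} (hT : T * f.bilin a b = -(f.bilin a b * T)) :
      B (T (f.bilin a b X)) (f.bilin a b Y) = -(Q a * Q b) * B (T X) Y := by
    rw [bilin_apply_apply_of_isSkewAdjoint_of_anticomm hskew hT,
      evenHom_bilin_mul_self_of_isOrtho f hab, Module.algebraMap_end_apply, map_smul, smul_eq_mul]
  rw [hR, mul_comm _ κ, mul_smul]
  congr 1
  rw [Finset.smul_sum]
  refine Finset.sum_congr rfl fun s hs => ?_
  rw [coeff (evenHom_bilin_anticomm_left_of_isOrtho f hab (ha s hs) (hb s hs)),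
    coeff (evenHom_bilin_anticomm_right_of_isOrtho f hab (ha s hs) (hb s hs))]
  module

theorem stmt5
    (V : Type*) [NormedAddCommGroup V] [InnerProductSpace ℝ V] [FiniteDimensional ℝ V]
    (r : ℕ) (hr : 3 ≤ r)
    (Q : QuadraticForm ℝ (EuclideanSpace ℝ (Fin r)))
    (hQ : ∀ v : EuclideanSpace ℝ (Fin r), Q v = -‖v‖ ^ 2)
    (φ : CliffordAlgebra.even Q →ₐ[ℝ] Module.End ℝ V)
    (e : Fin r → EuclideanSpace ℝ (Fin r))
    (he : ∀ i, e i = EuclideanSpace.single i (1 : ℝ))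
    (J : Fin r → Fin r → Module.End ℝ V)
    (hJ : ∀ i j, J i j = φ ((CliffordAlgebra.even.ι Q).bilin (e i) (e j)))
    (hskew : ∀ i j, i ≠ j → ∀ x y : V, ⟪J i j x, y⟫ = -⟪x, J i j y⟫)
    (κ : ℝ) (R : V →ₗ[ℝ] V →ₗ[ℝ] Module.End ℝ V)
    (hR : ∀ X Y : V,
      ⁅R X Y, J ⟨0, by omega⟩ ⟨1, by omega⟩⁆ =
        κ • ∑ s ∈ Finset.univ.filter (fun s : Fin r => 2 ≤ (s : ℕ)),
          (⟪J s ⟨0, by omega⟩ X, Y⟫ • J s ⟨1, by omega⟩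
            - ⟪J s ⟨1, by omega⟩ X, Y⟫ • J s ⟨0, by omega⟩)) :
    ∀ X Y : V,
      ⁅R (J ⟨0, by omega⟩ ⟨1, by omega⟩ X) (J ⟨0, by omega⟩ ⟨1, by omega⟩ Y), J ⟨0, by omega⟩ ⟨1, by omega⟩⁆ =
        κ • ∑ s ∈ Finset.univ.filter (fun s : Fin r => 2 ≤ (s : ℕ)),
          (-(⟪J s ⟨0, by omega⟩ X, Y⟫ • J s ⟨1, by omega⟩)
            + ⟪J s ⟨1, by omega⟩ X, Y⟫ • J s ⟨0, by omega⟩) := by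
  obtain rfl := funext he
  obtain rfl := funext₂ hJ
  have h01 : (⟨0, by omega⟩ : Fin r) ≠ ⟨1, by omega⟩ := by simp
  intro X Y
  simpa [hQ] using stmt5_general ((CliffordAlgebra.even.ι Q).compr₂ φ) (innerₗ V)
    (isOrtho_single_of_ne hQ h01) (fun x y => by simpa using hskew _ _ h01 x y) _ _
    (fun s hs => isOrtho_single_of_ne hQ fun h => by simp [h] at hs)
    (fun s hs => isOrtho_single_of_ne hQ fun h => by simp [h] at hs) κ (fun X Y => R X Y) hR X Y
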